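/- arXiv:2002.00810 — 2 statements merged into one kernel-verified Lean document; each statement's English description precedes it below -/
import Mathlib

section
/- Let v : ℂP¹ → ℂP² be the map v(t₁ : t₂) = (i(t₁² + t₂²) : 2t₁t₂ : t₁² − t₂²) onto the conic Q = {z₁² + z₂² + z₃² = 0}. For distinct points p, q ∈ ℂP¹, choose representatives and let w = v(p) × v(q) ∈ ℂ³ be the cross product of representatives of v(p) and v(q). Then w ≠ 0 and w₁² + w₂² + w₃² ≠ 0, so [w] ∈ ℂP² ∖ Q and is independent of the chosen representatives; and the induced map u : (ℂP¹ × ℂP¹) ∖ Δ → ℂP² ∖ Q, u(p,q) = [v(p) × v(q)], is surjective with u(p,q) = u(p′,q′) if and only if (p′,q′) = (p,q) or (p′,q′) = (q,p) (so u is two-to-one). -/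
/-- The Veronese-type parametrization of the conic `Q = {z₁²+z₂²+z₃²=0} ⊂ ℂP²`. -/
def vrn (t : Fin 2 → ℂ) : Fin 3 → ℂ :=
  ![Complex.I * (t 0 ^ 2 + t 1 ^ 2), 2 * t 0 * t 1, t 0 ^ 2 - t 1 ^ 2]

/-- Projective proportionality of homogeneous coordinate vectors. -/
def PropTo {m : ℕ} (a b : Fin m → ℂ) : Prop := ∃ c : ℂ, c ≠ 0 ∧ b = c • a

theorem crossW (p q : Fin 2 → ℂ) : crossProduct (vrn p) (vrn q) =
    (2 * (p 0 * q 1 - p 1 * q 0)) • ![-(p 0 * q 0 + p 1 * q 1),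
      Complex.I * (p 0 * q 1 + p 1 * q 0), Complex.I * (p 0 * q 0 - p 1 * q 1)] := by
  rw [cross_apply]
  ext i
  fin_cases i <;> simp [vrn] <;> ring

theorem propTo_iff (p q : Fin 2 → ℂ) (hp : p ≠ 0) (hq : q ≠ 0) :
    PropTo p q ↔ p 0 * q 1 - p 1 * q 0 = 0 := by
  constructor
  · rintro ⟨c, hc, rfl⟩
    simp
    ring
  · intro h
    by_cases h0 : p 0 = 0
    · have h1 : p 1 ≠ 0 := by
        intro h1
        exact hp (by ext i; fin_cases i <;> simp [h0, h1])
      have e : q = (q 1 / p 1) • p := by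
        ext i
        fin_cases i
        · simp [h0] at h ⊢
          tauto
        · simp [h1]
      refine ⟨q 1 / p 1, ?_, e⟩
      intro hz
      rw [hz, zero_smul] at e
      exact hq e
    · have e : q = (q 0 / p 0) • p := by
        ext i
        fin_cases i
        · simp [h0]
        · simp
          field_simp
          linear_combination h
      refine ⟨q 0 / p 0, ?_, e⟩
      intro hz
      rw [hz, zero_smul] at e
      exact hq e

theorem vrn_smul (c : ℂ) (p : Fin 2 → ℂ) : vrn (c • p) = c ^ 2 • vrn p := by
  ext i
  fin_cases i <;> simp [vrn] <;> ring

theorem cross_scale (p q : Fin 2 → ℂ) (c d : ℂ) :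
    crossProduct (vrn (c • p)) (vrn (d • q)) =
      (c ^ 2 * d ^ 2) • crossProduct (vrn p) (vrn q) := by
  rw [vrn_smul, vrn_smul]
  simp [smul_smul]
  try ring_nf

theorem PropTo.symm' {m : ℕ} {a b : Fin m → ℂ} (h : PropTo a b) : PropTo b a := by
  obtain ⟨c, hc, rfl⟩ := h
  exact ⟨c⁻¹, inv_ne_zero hc, by rw [smul_smul, inv_mul_cancel₀ hc, one_smul]⟩

theorem PropTo.trans' {m : ℕ} {a b d : Fin m → ℂ} (h : PropTo a b) (h' : PropTo b d) :
    PropTo a d := by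
  obtain ⟨c, hc, rfl⟩ := h
  obtain ⟨c', hc', rfl⟩ := h'
  exact ⟨c' * c, mul_ne_zero hc' hc, by rw [smul_smul]⟩

theorem sumsq (p q : Fin 2 → ℂ) :
    (crossProduct (vrn p) (vrn q) 0) ^ 2 + (crossProduct (vrn p) (vrn q) 1) ^ 2 +
        (crossProduct (vrn p) (vrn q) 2) ^ 2 = -4 * (p 0 * q 1 - p 1 * q 0) ^ 4 := by
  rw [crossW]
  simp
  ring_nf
  simp only [Complex.I_sq]
  ring

/-- for distinct `p, q ∈ ℂP¹`, the cross product `w = v(p) × v(q)` of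
representatives is nonzero with `w₁²+w₂²+w₃² ≠ 0`, its projective class is independent
of the representatives, and the induced map `u(p,q) = [v(p) × v(q)]` from
`(ℂP¹×ℂP¹)∖Δ` to `ℂP²∖Q` is surjective and exactly two-to-one:
`u(p,q) = u(p',q')` iff `(p',q') = (p,q)` or `(p',q') = (q,p)`. -/
theorem stmt9 :
    (∀ p q : Fin 2 → ℂ, p ≠ 0 → q ≠ 0 → ¬ PropTo p q →
      crossProduct (vrn p) (vrn q) ≠ 0 ∧
      (crossProduct (vrn p) (vrn q) 0) ^ 2 + (crossProduct (vrn p) (vrn q) 1) ^ 2 +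
        (crossProduct (vrn p) (vrn q) 2) ^ 2 ≠ 0) ∧
    (∀ p q : Fin 2 → ℂ, p ≠ 0 → q ≠ 0 → ¬ PropTo p q →
      ∀ c d : ℂ, c ≠ 0 → d ≠ 0 →
        ∃ e : ℂ, e ≠ 0 ∧
          crossProduct (vrn (c • p)) (vrn (d • q)) = e • crossProduct (vrn p) (vrn q)) ∧
    (∀ w : Fin 3 → ℂ, w ≠ 0 → (w 0) ^ 2 + (w 1) ^ 2 + (w 2) ^ 2 ≠ 0 →
      ∃ p q : Fin 2 → ℂ, p ≠ 0 ∧ q ≠ 0 ∧ ¬ PropTo p q ∧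
        ∃ e : ℂ, e ≠ 0 ∧ crossProduct (vrn p) (vrn q) = e • w) ∧
    (∀ p q p' q' : Fin 2 → ℂ, p ≠ 0 → q ≠ 0 → p' ≠ 0 → q' ≠ 0 →
      ¬ PropTo p q → ¬ PropTo p' q' →
      ((∃ e : ℂ, e ≠ 0 ∧
          crossProduct (vrn p') (vrn q') = e • crossProduct (vrn p) (vrn q)) ↔
        ((PropTo p p' ∧ PropTo q q') ∨ (PropTo p q' ∧ PropTo q p')))) := by
  refine ⟨?_, ?_, ?_, ?_⟩
  · intro p q hp hq h
    rw [propTo_iff p q hp hq] at h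
    have key : (crossProduct (vrn p) (vrn q) 0) ^ 2 + (crossProduct (vrn p) (vrn q) 1) ^ 2 +
        (crossProduct (vrn p) (vrn q) 2) ^ 2 ≠ 0 := by
      rw [sumsq]
      exact mul_ne_zero (by norm_num) (pow_ne_zero _ h)
    refine ⟨?_, key⟩
    intro h0
    apply key
    rw [h0]
    simp
  · intro p q hp hq h c d hc hd
    exact ⟨c ^ 2 * d ^ 2, by positivity, cross_scale p q c d⟩
  · intro w hw hQ
    have hI : Complex.I ^ 2 = -1 := Complex.I_sq
    obtain ⟨X, hX⟩ : ∃ X, X = (-w 0 - Complex.I * w 2) / 2 := ⟨_, rfl⟩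
    obtain ⟨Z, hZ⟩ : ∃ Z, Z = (-w 0 + Complex.I * w 2) / 2 := ⟨_, rfl⟩
    obtain ⟨Y, hY⟩ : ∃ Y, Y = -Complex.I * w 1 := ⟨_, rfl⟩
    have h0 : w 0 = -(X + Z) := by rw [hX, hZ]; ring
    have h1 : w 1 = Complex.I * Y := by rw [hY]; linear_combination (w 1) * hI
    have h2 : w 2 = Complex.I * (X - Z) := by rw [hX, hZ]; linear_combination (w 2) * hI
    have hdisc : Y ^ 2 - 4 * X * Z ≠ 0 := by
      intro h
      apply hQ
      rw [h0, h1, h2]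
      linear_combination -h + (Y ^ 2 + (X - Z) ^ 2) * hI
    have main : ∀ p q : Fin 2 → ℂ, ∀ k : ℂ, k ≠ 0 → p 0 * q 1 - p 1 * q 0 ≠ 0 →
        p 0 * q 0 = k * X → p 0 * q 1 + p 1 * q 0 = k * Y → p 1 * q 1 = k * Z →
        ∃ p q : Fin 2 → ℂ, p ≠ 0 ∧ q ≠ 0 ∧ ¬ PropTo p q ∧
          ∃ e : ℂ, e ≠ 0 ∧ crossProduct (vrn p) (vrn q) = e • w := by
      intro p q k hk hD e0 e1 e2
      have hp : p ≠ 0 := by rintro rfl; simp at hD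
      have hq : q ≠ 0 := by rintro rfl; simp at hD
      refine ⟨p, q, hp, hq, by rwa [propTo_iff p q hp hq],
        2 * (p 0 * q 1 - p 1 * q 0) * k, mul_ne_zero (mul_ne_zero two_ne_zero hD) hk, ?_⟩
      rw [crossW, e0, e1, e2, mul_smul _ k w]
      congr 1
      ext i
      fin_cases i
      · simp [h0]; ring
      · simp [h1]; ring
      · simp [h2]; ring
    by_cases hX0 : X = 0
    · have hY0 : Y ≠ 0 := by
        rintro rfl
        simp [hX0] at hdisc
      refine main ![0, 1] ![Y, Z] 1 one_ne_zero ?_ ?_ ?_ ?_ <;> simp [hX0, hY0]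
    · obtain ⟨r, hr⟩ := IsAlgClosed.exists_pow_nat_eq (Y ^ 2 - 4 * X * Z) (n := 2) two_pos
      have hr0 : r ≠ 0 := by
        rintro rfl
        exact hdisc (by rw [← hr]; ring)
      refine main ![2 * X, Y + r] ![2 * X, Y - r] (4 * X) (by simp [hX0]) ?_ ?_ ?_ ?_
      · have : 2 * X * (Y - r) - (Y + r) * (2 * X) = -4 * X * r := by ring
        simp only [Matrix.cons_val_zero, Matrix.cons_val_one]
        rw [this]
        simp [hX0, hr0]
      · simp; ring
      · simp; ring
      · simp
        linear_combination -hr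
  · intro p q p' q' hp hq hp' hq' h h'
    constructor
    · rintro ⟨e, he, heq⟩
      have hD : p 0 * q 1 - p 1 * q 0 ≠ 0 := by rwa [propTo_iff p q hp hq] at h
      have hD' : p' 0 * q' 1 - p' 1 * q' 0 ≠ 0 := by rwa [propTo_iff p' q' hp' hq'] at h'
      rw [crossW, crossW] at heq
      have e0 := congrFun heq 0
      have e1 := congrFun heq 1
      have e2 := congrFun heq 2
      simp only [Pi.smul_apply, smul_eq_mul, Matrix.cons_val_zero, Matrix.cons_val_one,
        Matrix.cons_val] at e0 e1 e2
      have hI : Complex.I ^ 2 = -1 := Complex.I_sq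
      obtain ⟨D', hDd'⟩ : ∃ x, x = p' 0 * q' 1 - p' 1 * q' 0 := ⟨_, rfl⟩
      obtain ⟨D, hDd⟩ : ∃ x, x = p 0 * q 1 - p 1 * q 0 := ⟨_, rfl⟩
      rw [← hDd'] at e0 e1 e2 hD'
      rw [← hDd] at e0 e1 e2
      have g1 : D' * (p' 0 * q' 1 + p' 1 * q' 0) = e * D * (p 0 * q 1 + p 1 * q 0) := by
        have := mul_left_cancel₀ (mul_ne_zero two_ne_zero Complex.I_ne_zero)
          (show 2 * Complex.I * (D' * (p' 0 * q' 1 + p' 1 * q' 0)) =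
            2 * Complex.I * (e * D * (p 0 * q 1 + p 1 * q 0)) by linear_combination e1)
        exact this
      have g2 : D' * (p' 0 * q' 0 - p' 1 * q' 1) = e * D * (p 0 * q 0 - p 1 * q 1) := by
        have := mul_left_cancel₀ (mul_ne_zero two_ne_zero Complex.I_ne_zero)
          (show 2 * Complex.I * (D' * (p' 0 * q' 0 - p' 1 * q' 1)) =
            2 * Complex.I * (e * D * (p 0 * q 0 - p 1 * q 1)) by linear_combination e2)
        exact this
      have f0 : D' * (p' 0 * q' 0) = e * D * (p 0 * q 0) := by
        linear_combination (-1/4 : ℂ) * e0 + (1/2 : ℂ) * g2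
      have f2 : D' * (p' 1 * q' 1) = e * D * (p 1 * q 1) := by
        linear_combination (-1/4 : ℂ) * e0 - (1/2 : ℂ) * g2
      have k1 : (p 0 * p' 1 - p 1 * p' 0) * (p 0 * q' 1 - p 1 * q' 0) = 0 := by
        apply (mul_eq_zero.mp _).resolve_left hD'
        linear_combination p 1 ^ 2 * f0 - p 0 * p 1 * g1 + p 0 ^ 2 * f2
      have k2 : (q 0 * p' 1 - q 1 * p' 0) * (q 0 * q' 1 - q 1 * q' 0) = 0 := by
        apply (mul_eq_zero.mp _).resolve_left hD'
        linear_combination q 1 ^ 2 * f0 - q 0 * q 1 * g1 + q 0 ^ 2 * f2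
      rw [mul_eq_zero, ← propTo_iff p p' hp hp', ← propTo_iff p q' hp hq'] at k1
      rw [mul_eq_zero, ← propTo_iff q p' hq hp', ← propTo_iff q q' hq hq'] at k2
      rcases k1 with k1 | k1 <;> rcases k2 with k2 | k2
      · exact absurd (k1.trans' k2.symm') h
      · exact Or.inl ⟨k1, k2⟩
      · exact Or.inr ⟨k1, k2⟩
      · exact absurd (k1.trans' k2.symm') h
    · rintro (⟨⟨c, hc, rfl⟩, ⟨d, hd, rfl⟩⟩ | ⟨⟨c, hc, rfl⟩, ⟨d, hd, rfl⟩⟩)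
      · exact ⟨c ^ 2 * d ^ 2, by positivity, cross_scale p q c d⟩
      · refine ⟨-(d ^ 2 * c ^ 2), by simp [hc, hd], ?_⟩
        rw [cross_scale, ← cross_anticomm, smul_neg, neg_smul]
end

section
/- Let V be a 2-dimensional complex vector space and g a nondegenerate symmetric ℂ-bilinear form on V. Then there exists a ℂ-linear endomorphism J of V with J ∘ J = −id_V and g(Jx, Jy) = g(x,y) for all x, y ∈ V, and the only ℂ-linear endomorphisms of V with these two properties are J and −J. Moreover the eigenspaces of J for the eigenvalues i and −i are exactly the two isotropic lines of g. -/
theorem exists_iso {V : Type*} [AddCommGroup V] [Module ℂ V] [FiniteDimensional ℂ V]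
    (hdim : Module.finrank ℂ V = 2)
    (g : V →ₗ[ℂ] V →ₗ[ℂ] ℂ) (hsymm : ∀ x y, g x y = g y x) :
    ∃ e : V, e ≠ 0 ∧ g e e = 0 := by
  let b := Module.finBasisOfFinrankEq ℂ V hdim
  by_cases ha : g (b 0) (b 0) = 0
  · exact ⟨b 0, b.ne_zero 0, ha⟩
  · obtain ⟨s, hs⟩ := IsAlgClosed.exists_pow_nat_eq
      (g (b 0) (b 1) ^ 2 - g (b 0) (b 0) * g (b 1) (b 1)) (n := 2) (by norm_num)
    refine ⟨(s - g (b 0) (b 1)) • b 0 + g (b 0) (b 0) • b 1, ?_, ?_⟩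
    · intro h
      have h1 := congrArg (fun v => b.repr v 1) h
      simp [Finsupp.single_apply] at h1
      exact ha h1
    · simp only [map_add, map_smul, LinearMap.add_apply, LinearMap.smul_apply, smul_eq_mul,
        hsymm (b 1) (b 0)]
      linear_combination g (b 0) (b 0) * hs

theorem exists_hyp {V : Type*} [AddCommGroup V] [Module ℂ V] [FiniteDimensional ℂ V]
    (hdim : Module.finrank ℂ V = 2)
    (g : V →ₗ[ℂ] V →ₗ[ℂ] ℂ) (hsymm : ∀ x y, g x y = g y x)
    (hnd : ∀ x, (∀ y, g x y = 0) → x = 0) :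
    ∃ e f : V, g e e = 0 ∧ g f f = 0 ∧ g e f = 1 ∧ ∀ x, x = g x f • e + g x e • f := by
  obtain ⟨e, he0, he⟩ := exists_iso hdim g hsymm
  obtain ⟨y, hy⟩ : ∃ y, g e y ≠ 0 := by
    by_contra! h
    exact he0 (hnd e h)
  obtain ⟨z, hz⟩ : ∃ z, g e z = 1 := ⟨(g e y)⁻¹ • y, by simp [hy]⟩
  obtain ⟨f, hf, hef⟩ : ∃ f, g f f = 0 ∧ g e f = 1 := by
    refine ⟨z - (g z z / 2) • e, ?_, ?_⟩
    · simp only [map_sub, map_smul, LinearMap.sub_apply, LinearMap.smul_apply, smul_eq_mul,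
        hsymm z e, he, hz]
      ring
    · simp [he, hz]
  have hfe : g f e = 1 := by rw [hsymm, hef]
  refine ⟨e, f, he, hf, hef, fun x => ?_⟩
  have hli : LinearIndependent ℂ ![e, f] := by
    rw [LinearIndependent.pair_iff]
    intro s t h
    have h1 := congrArg (g e) h
    have h2 := congrArg (g f) h
    simp [he, hf, hef, hfe] at h1 h2
    exact ⟨h2, h1⟩
  have hsp := hli.span_eq_top_of_card_eq_finrank (by simp [hdim])
  have hx : x ∈ Submodule.span ℂ (Set.range ![e, f]) := by rw [hsp]; trivial
  simp only [Matrix.range_cons, Matrix.range_empty, Set.union_empty, Set.singleton_union,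
    Submodule.mem_span_pair] at hx
  obtain ⟨a, c, rfl⟩ := hx
  simp [he, hf, hef, hfe]

/-- a nondegenerate symmetric ℂ-bilinear form on a 2-dimensional complex
vector space admits exactly two compatible "complex rotations" `±J` with `J² = -id`
and `g(Jx,Jy) = g(x,y)`, whose `±i`-eigenspaces are exactly the two isotropic lines. -/
theorem stmt16 {V : Type*} [AddCommGroup V] [Module ℂ V] [FiniteDimensional ℂ V]
    (hdim : Module.finrank ℂ V = 2)
    (g : V →ₗ[ℂ] V →ₗ[ℂ] ℂ) (hsymm : ∀ x y, g x y = g y x)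
    (hnd : ∀ x, (∀ y, g x y = 0) → x = 0) :
    ∃ J : V →ₗ[ℂ] V,
      (J ∘ₗ J = -LinearMap.id ∧ ∀ x y, g (J x) (J y) = g x y) ∧
      (∀ J' : V →ₗ[ℂ] V,
        (J' ∘ₗ J' = -LinearMap.id ∧ ∀ x y, g (J' x) (J' y) = g x y) →
        J' = J ∨ J' = -J) ∧
      Module.finrank ℂ (Module.End.eigenspace (J : Module.End ℂ V) Complex.I) = 1 ∧
      Module.finrank ℂ (Module.End.eigenspace (J : Module.End ℂ V) (-Complex.I)) = 1 ∧
      {x : V | g x x = 0} =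
        (Module.End.eigenspace (J : Module.End ℂ V) Complex.I : Set V) ∪
        (Module.End.eigenspace (J : Module.End ℂ V) (-Complex.I) : Set V) := by
  obtain ⟨e, f, he, hf, hef, hdec⟩ := exists_hyp hdim g hsymm hnd
  have hfe : g f e = 1 := by rw [hsymm, hef]
  have he0 : e ≠ 0 := by rintro rfl; simp at hef
  have hf0 : f ≠ 0 := by rintro rfl; simp at hef
  have hI : Complex.I ≠ 0 := Complex.I_ne_zero
  have hII : Complex.I * Complex.I = -1 := Complex.I_mul_I
  let J : V →ₗ[ℂ] V := (Complex.I • g.flip f).smulRight e - (Complex.I • g.flip e).smulRight f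
  have hJ : ∀ x, J x = (Complex.I * g x f) • e - (Complex.I * g x e) • f := fun x => by simp [J]
  have hJe : J e = Complex.I • e := by simp [hJ, he, hef]
  have hJf : J f = -(Complex.I • f) := by simp [hJ, hf, hfe]
  have hext : ∀ A B : V →ₗ[ℂ] V, A e = B e → A f = B f → A = B := by
    intro A B h1 h2
    ext x
    rw [hdec x]
    simp only [map_add, map_smul, h1, h2]
  have hzero : ∀ x, g x e = 0 → g x f = 0 → x = 0 := by
    intro x h1 h2
    rw [hdec x, h1, h2]; simp
  have hE1 : Module.End.eigenspace (J : Module.End ℂ V) Complex.I = Submodule.span ℂ {e} := by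
    ext x
    rw [Module.End.mem_eigenspace_iff, Submodule.mem_span_singleton]
    constructor
    · intro h
      have h1 := congrArg (fun v => g v e) h
      simp [hJ, he, hfe] at h1
      have h2 : g x e = 0 := by
        have : Complex.I * g x e = 0 := by linear_combination (-1 / 2) * h1
        simpa using this
      exact ⟨g x f, by conv_rhs => rw [hdec x, h2]
                       simp⟩
    · rintro ⟨a, rfl⟩
      rw [map_smul, hJe, smul_comm]
  have hE2 : Module.End.eigenspace (J : Module.End ℂ V) (-Complex.I) = Submodule.span ℂ {f} := by
    ext x
    rw [Module.End.mem_eigenspace_iff, Submodule.mem_span_singleton]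
    constructor
    · intro h
      have h1 := congrArg (fun v => g v f) h
      simp [hJ, hf, hef] at h1
      have h2 : g x f = 0 := by
        have : Complex.I * g x f = 0 := by linear_combination (1 / 2) * h1
        simpa using this
      exact ⟨g x e, by conv_rhs => rw [hdec x, h2]
                       simp⟩
    · rintro ⟨a, rfl⟩
      rw [map_smul, hJf, neg_smul, smul_neg, smul_comm]
  refine ⟨J, ⟨?_, ?_⟩, ?_, ?_, ?_, ?_⟩
  · apply hext
    · simp [hJe, smul_smul, hII]
    · simp [hJf, smul_smul, hII]
  · intro x y
    have hxy : g x y = g x f * g y e + g x e * g y f := by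
      conv_lhs => rw [hdec x]
      simp [hsymm e y, hsymm f y]
    rw [hxy, hJ, hJ]
    simp [he, hf, hef, hfe]
    linear_combination (-(g x f * g y e + g x e * g y f)) * hII
  · rintro J' ⟨h1, h2⟩
    have hsq : ∀ x, J' (J' x) = -x := fun x => by simpa using LinearMap.congr_fun h1 x
    obtain ⟨p, q, hp⟩ : ∃ p q : ℂ, J' e = p • e + q • f := ⟨_, _, hdec (J' e)⟩
    obtain ⟨r, s, hr⟩ : ∃ r s : ℂ, J' f = r • e + s • f := ⟨_, _, hdec (J' f)⟩
    have a1 := h2 e e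
    have a2 := h2 e f
    have a3 := h2 f f
    have c1 := congrArg (fun v => g v f) (hsq e)
    have c2 := congrArg (fun v => g v e) (hsq e)
    have c3 := congrArg (fun v => g v f) (hsq f)
    have c4 := congrArg (fun v => g v e) (hsq f)
    simp only [hp, hr, map_add, map_smul, map_neg, LinearMap.neg_apply, LinearMap.add_apply,
      LinearMap.smul_apply, smul_eq_mul, he, hf, hef, hfe] at a1 a2 a3 c1 c2 c3 c4
    have hp0 : p ≠ 0 := by
      rintro rfl
      have : (2 : ℂ) = 0 := by linear_combination c1 - a2
      norm_num at this
    have hq : q = 0 := by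
      have : p * q = 0 := by linear_combination a1 / 2
      exact (mul_eq_zero.1 this).resolve_left hp0
    subst hq
    have hps : s = -p := by
      apply mul_left_cancel₀ hp0
      linear_combination a2 + c1
    subst hps
    have hr0 : r = 0 := by
      have : p * r = 0 := by linear_combination -a3 / 2
      exact (mul_eq_zero.1 this).resolve_left hp0
    subst hr0
    have hpp : (p - Complex.I) * (p + Complex.I) = 0 := by linear_combination c1 - hII
    rcases mul_eq_zero.1 hpp with h | h
    · left
      have : p = Complex.I := by linear_combination h
      subst this
      apply hext <;> simp [hp, hr, hJe, hJf]
    · right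
      have : p = -Complex.I := by linear_combination h
      subst this
      apply hext <;> simp [hp, hr, hJe, hJf]
  · rw [hE1, finrank_span_singleton he0]
  · rw [hE2, finrank_span_singleton hf0]
  · rw [hE1, hE2]
    ext x
    simp only [Set.mem_setOf_eq, Set.mem_union, SetLike.mem_coe, Submodule.mem_span_singleton]
    constructor
    · intro h
      have hx : g x x = 2 * (g x e * g x f) := by
        conv_lhs => rw [hdec x]
        simp [hsymm e x, hsymm f x, he, hf, hef, hfe]
        ring
      rw [hx] at h
      have h' : g x e * g x f = 0 := by linear_combination h / 2
      rcases mul_eq_zero.1 h' with h2 | h2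
      · left
        exact ⟨g x f, by conv_rhs => rw [hdec x, h2]
                         simp⟩
      · right
        exact ⟨g x e, by conv_rhs => rw [hdec x, h2]
                         simp⟩
    · rintro (⟨a, rfl⟩ | ⟨a, rfl⟩) <;> simp [he, hf]
end
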